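/- Let k be an algebraically closed field, n ≥ 1, m ≥ 1, λ ≥ 0, μ ≥ 0, δ, d integers. Give the polynomial ring S = k[u₀,…,uₙ,x,y,z] the ℕ×ℕ-valued weighting with weight (1,0) on each uᵢ, (0,1) on x, (λ,1) on y and (μ,m) on z, and let V(δ,d) ⊆ S be the k-subspace of polynomials that are weighted homogeneous of weight (δ,d). Assume d ≥ 3m, δ ≥ 3, δ ≥ 3λ and δ ≥ 3μ. Then for every a = (a₁,…,aₙ) ∈ kⁿ and every b, c ∈ k, the k-linear map V(δ,d) → k[u₁,…,uₙ,y,z]/(u₁,…,uₙ,y,z)⁴ sending f to the residue class of f(1, u₁+a₁, …, uₙ+aₙ, 1, y+b, z+c) is surjective. (This is the chart form of Lemma 3.8(2): the fourth restriction map r₄(p) of O_Q(δ,d) is surjective at every point p of Uₓ = (x ≠ 0).) -/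

import Mathlib

open MvPolynomial

/-- Lemma 3.8(2), chart form: on the `P(1,1,m)`-bundle `Q` over `Pⁿ` with Cox
coordinates `u₀,…,uₙ,x,y,z` of bidegrees `(1,0),…,(1,0),(0,1),(λ,1),(μ,m)`, if
`d ≥ 3m`, `δ ≥ 3`, `δ ≥ 3λ` and `δ ≥ 3μ`, then the fourth restriction map
`r₄(p) : H⁰(Q, O_Q(δ,d)) → O_Q(δ,d) ⊗ (O_Q/m_p⁴)` is surjective at every point
`p` of `Uₓ = (x ≠ 0)`, written in the chart `u₀ ≠ 0`, `x ≠ 0` with chart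
coordinates `u₁,…,uₙ,y,z`. -/
theorem fourth_restriction_map_surjective_on_Ux
    {k : Type*} [Field k] [IsAlgClosed k]
    {n m lam μ : ℕ} (hn : 1 ≤ n) (hm : 1 ≤ m)
    (δ d : ℕ) (hd : 3 * m ≤ d) (hδ1 : 3 ≤ δ) (hδ2 : 3 * lam ≤ δ) (hδ3 : 3 * μ ≤ δ)
    -- the bigrading: `uᵢ ↦ (1,0)`, `x ↦ (0,1)`, `y ↦ (λ,1)`, `z ↦ (μ,m)`
    (w : Fin (n + 1) ⊕ Fin 3 → ℕ × ℕ)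
    (hw : w = Sum.elim (fun _ => (1, 0)) ![(0, 1), (lam, 1), (μ, m)])
    (a : Fin n → k) (b c : k) :
    ∀ t : MvPolynomial (Fin n ⊕ Fin 2) k,
      ∃ f : MvPolynomial (Fin (n + 1) ⊕ Fin 3) k,
        IsWeightedHomogeneous w f (δ, d) ∧
        Ideal.Quotient.mk
            ((Ideal.span (Set.range (X : Fin n ⊕ Fin 2 → MvPolynomial (Fin n ⊕ Fin 2) k))) ^ 4)
            (aeval
              (Sum.elim
                (fun i : Fin (n + 1) =>
                  Fin.cases 1 (fun j : Fin n => X (Sum.inl j) + C (a j)) i)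
                ![1, X (Sum.inr 0) + C b, X (Sum.inr 1) + C c]) f) =
          Ideal.Quotient.mk _ t := by
  classical
  subst hw
  set w : Fin (n + 1) ⊕ Fin 3 → ℕ × ℕ :=
    Sum.elim (fun _ => (1, 0)) ![(0, 1), (lam, 1), (μ, m)] with hw
  set φ : Fin (n + 1) ⊕ Fin 3 → MvPolynomial (Fin n ⊕ Fin 2) k :=
    Sum.elim
      (fun i : Fin (n + 1) => Fin.cases 1 (fun j : Fin n => X (Sum.inl j) + C (a j)) i)
      ![1, X (Sum.inr 0) + C b, X (Sum.inr 1) + C c] with hφ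
  -- homogeneous lifts of the local coordinates
  have key : ∀ i : Fin n ⊕ Fin 2, ∃ (L : MvPolynomial (Fin (n + 1) ⊕ Fin 3) k) (e : ℕ × ℕ),
      IsWeightedHomogeneous w L e ∧ aeval φ L = X i ∧ 3 * e.1 ≤ δ ∧ 3 * e.2 ≤ d := by
    have h0 : IsWeightedHomogeneous w
        (X (Sum.inl 0) : MvPolynomial (Fin (n + 1) ⊕ Fin 3) k) (1, 0) :=
      isWeightedHomogeneous_X k w (Sum.inl 0)
    have hx : IsWeightedHomogeneous w
        (X (Sum.inr 0) : MvPolynomial (Fin (n + 1) ⊕ Fin 3) k) (0, 1) :=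
      isWeightedHomogeneous_X k w (Sum.inr 0)
    have hmix : ∀ (r : k) (p q : ℕ), IsWeightedHomogeneous w
        (C r * (X (Sum.inl 0) ^ p * X (Sum.inr 0) ^ q) :
          MvPolynomial (Fin (n + 1) ⊕ Fin 3) k) (p, q) := by
      intro r p q
      have := ((h0.pow p).mul (hx.pow q)).C_mul r
      simpa using this
    rintro (j | j)
    · refine ⟨X (Sum.inl j.succ) - C (a j) * (X (Sum.inl 0) ^ 1 * X (Sum.inr 0) ^ 0), (1, 0),
        (isWeightedHomogeneous_X k w (Sum.inl j.succ)).sub (hmix _ 1 0), ?_, by simpa, by simp⟩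
      simp [hφ, algebraMap_eq]
    · fin_cases j
      · refine ⟨X (Sum.inr 1) - C b * (X (Sum.inl 0) ^ lam * X (Sum.inr 0) ^ 1), (lam, 1),
          (isWeightedHomogeneous_X k w (Sum.inr 1)).sub (hmix _ lam 1), ?_, by simpa, ?_⟩
        · simp [hφ, algebraMap_eq]
        · simp only; omega
      · refine ⟨X (Sum.inr 2) - C c * (X (Sum.inl 0) ^ μ * X (Sum.inr 0) ^ m), (μ, m),
          (isWeightedHomogeneous_X k w (Sum.inr 2)).sub (hmix _ μ m), ?_, by simpa, by simpa⟩
        simp [hφ, algebraMap_eq]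
  choose L e hL hLX he1 he2 using key
  intro t
  induction t using MvPolynomial.induction_on' with
  | add p q hp hq =>
    obtain ⟨f, hf, hf'⟩ := hp
    obtain ⟨g, hg, hg'⟩ := hq
    exact ⟨f + g, hf.add hg, by rw [map_add, map_add, map_add, hf', hg']⟩
  | monomial s r =>
    by_cases hs : 4 ≤ s.degree
    · refine ⟨0, isWeightedHomogeneous_zero _ _ _, ?_⟩
      rw [map_zero, map_zero, eq_comm, Ideal.Quotient.eq_zero_iff_mem]
      refine (mem_pow_idealOfVars_iff' 4 _).2 fun x hx => ?_
      rw [coeff_monomial, if_neg]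
      rintro rfl
      omega
    · have hs' : ∑ i, s i ≤ 3 := by
        rw [Finsupp.degree_eq_sum] at hs
        omega
      have bound : ∀ (g : Fin n ⊕ Fin 2 → ℕ) (D : ℕ), (∀ i, 3 * g i ≤ D) →
          ∑ i, s i * g i ≤ D := by
        intro g D hg
        have h1 : 3 * ∑ i, s i * g i ≤ (∑ i, s i) * D := by
          rw [Finset.mul_sum, Finset.sum_mul]
          refine Finset.sum_le_sum fun i _ => ?_
          calc 3 * (s i * g i) = s i * (3 * g i) := by ring
            _ ≤ s i * D := Nat.mul_le_mul_left _ (hg i)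
        have h2 : (∑ i, s i) * D ≤ 3 * D := Nat.mul_le_mul_right _ hs'
        omega
      have b1 := bound (fun i => (e i).1) δ he1
      have b2 := bound (fun i => (e i).2) d he2
      have hP := IsWeightedHomogeneous.prod Finset.univ (fun i => L i ^ s i)
        (fun i => s i • e i) (w := w) (fun i _ => (hL i).pow (s i))
      have hQ := ((hP.mul (((isWeightedHomogeneous_X k w (Sum.inl 0)).pow
        (δ - ∑ i, s i * (e i).1)).mul ((isWeightedHomogeneous_X k w (Sum.inr 0)).pow
        (d - ∑ i, s i * (e i).2)))).C_mul r)
      refine ⟨C r * ((∏ i, L i ^ s i) * (X (Sum.inl 0) ^ (δ - ∑ i, s i * (e i).1) *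
        X (Sum.inr 0) ^ (d - ∑ i, s i * (e i).2))), ?_, ?_⟩
      · convert hQ using 1
        ext
        · simp [hw, Prod.fst_sum, -Fintype.sum_sum_type]
          omega
        · simp [hw, Prod.snd_sum, -Fintype.sum_sum_type]
          omega
      · congr 1
        rw [map_mul, map_mul, map_mul, map_pow, map_pow, map_prod]
        simp only [map_pow, hLX, aeval_X]
        rw [monomial_eq, Finsupp.prod_fintype _ _ (by simp)]
        simp [hφ, algebraMap_eq]
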